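/- Let n be a natural number, b : {1,…,n} → ℂ, γ : {1,…,n} → ℝ, and Y ∈ ℝ. Then ∫_{−∞}^{∞} |Σ_{j=1}^{n} b_j e^{iγ_j Y} / (1 + (t − γ_j)²)|² dt = (π/2) · ∫_{−∞}^{∞} |Σ_{j=1}^{n} b_j e^{iγ_j (Y+y)}|² e^{−2|y|} dy. -/

import Mathlib

open Real MeasureTheory Complex

/-! Let `f y = e^{-|y|} ∑ⱼ bⱼ e^{iγⱼ(Y+y)}`. The right-hand integral is `∫ |f|²`, and at frequency
`t / 2π` the Fourier transform of `f` is `2 ∑ⱼ bⱼ e^{iγⱼY} / (1 + (t - γⱼ)²)`, so the identity is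
Plancherel's theorem for `f`. The transform of `f` decays like `t⁻²`, hence is integrable, and
Plancherel follows from self-adjointness of the Fourier transform and Fourier inversion. -/

open scoped FourierTransform

section Plancherel

variable {V H : Type*} [NormedAddCommGroup V] [InnerProductSpace ℝ V] [FiniteDimensional ℝ V]
  [MeasurableSpace V] [BorelSpace V]
  [NormedAddCommGroup H] [InnerProductSpace ℂ H] [CompleteSpace H]

lemma integral_inner_fourier_eq_integral_inner_fourierInv {f g : V → H} (hf : Integrable f)
    (hg : Integrable g) : ∫ ξ, inner ℂ (𝓕 f ξ) (g ξ) = ∫ x, inner ℂ (f x) (𝓕⁻ g x) := by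
  simpa using! VectorFourier.integral_sesq_fourierIntegral_eq_neg_flip (innerSL ℂ) (L := innerₗ V)
    continuous_fourierChar continuous_inner hf hg

lemma integral_inner_fourier_fourier_of_integrable {f g : V → H} (hf : Integrable f)
    (hg_cont : Continuous g) (hg : Integrable g) (hg' : Integrable (𝓕 g)) :
    ∫ ξ, inner ℂ (𝓕 f ξ) (𝓕 g ξ) = ∫ x, inner ℂ (f x) (g x) := by
  rw [integral_inner_fourier_eq_integral_inner_fourierInv hf hg',
    hg_cont.fourierInv_fourier_eq hg hg']

lemma integral_norm_sq_fourier_of_integrable {f : V → H} (hf_cont : Continuous f)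
    (hf : Integrable f) (hf' : Integrable (𝓕 f)) :
    ∫ ξ, ‖𝓕 f ξ‖ ^ 2 = ∫ x, ‖f x‖ ^ 2 := by
  apply Complex.ofReal_injective
  simpa only [← integral_complex_ofReal, ofReal_pow, inner_self_eq_norm_sq_to_K,
    coe_algebraMap] using integral_inner_fourier_fourier_of_integrable hf hf_cont hf hf'

end Plancherel

section TwoSidedExponential

lemma cexp_mul_sub_mul_abs_eqOn_Iic (a c : ℂ) :
    Set.EqOn (fun y : ℝ ↦ cexp ((c + a) * y)) (fun y ↦ cexp (c * y - a * |y|)) (Set.Iic 0) := by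
  intro y hy
  simp only [abs_of_nonpos (Set.mem_Iic.1 hy), ofReal_neg]
  ring_nf

lemma cexp_mul_sub_mul_abs_eqOn_Ioi (a c : ℂ) :
    Set.EqOn (fun y : ℝ ↦ cexp ((c - a) * y)) (fun y ↦ cexp (c * y - a * |y|)) (Set.Ioi 0) := by
  intro y hy
  simp only [abs_of_pos (Set.mem_Ioi.1 hy)]
  ring_nf

variable {a c : ℂ}

lemma integrableOn_cexp_mul_sub_mul_abs_Iic (h : 0 < (c + a).re) :
    IntegrableOn (fun y : ℝ ↦ cexp (c * y - a * |y|)) (Set.Iic 0) :=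
  (integrableOn_exp_mul_complex_Iic h 0).congr_fun
    (cexp_mul_sub_mul_abs_eqOn_Iic a c) measurableSet_Iic

lemma integrableOn_cexp_mul_sub_mul_abs_Ioi (h : (c - a).re < 0) :
    IntegrableOn (fun y : ℝ ↦ cexp (c * y - a * |y|)) (Set.Ioi 0) :=
  (integrableOn_exp_mul_complex_Ioi h 0).congr_fun
    (cexp_mul_sub_mul_abs_eqOn_Ioi a c) measurableSet_Ioi

lemma integrable_cexp_mul_sub_mul_abs (h : |c.re| < a.re) :
    Integrable (fun y : ℝ ↦ cexp (c * y - a * |y|)) := by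
  obtain ⟨hneg, hpos⟩ := abs_lt.1 h
  rw [← integrableOn_univ, ← Set.Iic_union_Ioi (a := (0 : ℝ))]
  exact (integrableOn_cexp_mul_sub_mul_abs_Iic (by rw [add_re]; linarith)).union
    (integrableOn_cexp_mul_sub_mul_abs_Ioi (by rw [sub_re]; linarith))

lemma integral_cexp_mul_sub_mul_abs (h : |c.re| < a.re) :
    ∫ y : ℝ, cexp (c * y - a * |y|) = 2 * a / (a ^ 2 - c ^ 2) := by
  obtain ⟨hneg, hpos⟩ := abs_lt.1 h
  have hadd : 0 < (c + a).re := by rw [add_re]; linarith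
  have hsub : (c - a).re < 0 := by rw [sub_re]; linarith
  have hadd_ne : c + a ≠ 0 := fun h0 ↦ by simp [h0] at hadd
  have hsub_ne : c - a ≠ 0 := fun h0 ↦ by simp [h0] at hsub
  have hsq_ne : a ^ 2 - c ^ 2 ≠ 0 := by
    rw [show a ^ 2 - c ^ 2 = -((c + a) * (c - a)) by ring]
    exact neg_ne_zero.2 (mul_ne_zero hadd_ne hsub_ne)
  calc ∫ y : ℝ, cexp (c * y - a * |y|)
      = (∫ y : ℝ in Set.Iic 0, cexp ((c + a) * y)) + ∫ y : ℝ in Set.Ioi 0, cexp ((c - a) * y) := by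
        rw [setIntegral_congr_fun measurableSet_Iic (cexp_mul_sub_mul_abs_eqOn_Iic a c),
          setIntegral_congr_fun measurableSet_Ioi (cexp_mul_sub_mul_abs_eqOn_Ioi a c),
          intervalIntegral.integral_Iic_add_Ioi (integrableOn_cexp_mul_sub_mul_abs_Iic hadd)
            (integrableOn_cexp_mul_sub_mul_abs_Ioi hsub)]
    _ = 1 / (c + a) - 1 / (c - a) := by
        rw [integral_exp_mul_complex_Iic hadd, integral_exp_mul_complex_Ioi hsub]
        simp only [ofReal_zero, mul_zero, Complex.exp_zero]
        ring
    _ = 2 * a / (a ^ 2 - c ^ 2) := by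
        field_simp
        ring

end TwoSidedExponential

lemma integrable_inv_sq_add_sq_sub {a : ℝ} (ha : a ≠ 0) (x₀ : ℝ) :
    Integrable (fun t : ℝ ↦ (a ^ 2 + (t - x₀) ^ 2)⁻¹) := by
  convert ((integrable_inv_one_add_sq.comp_div ha).comp_sub_right x₀).const_mul (a ^ 2)⁻¹ using 2
  field_simp

section DampedExpSum

variable {ι H : Type*} [Fintype ι] [NormedAddCommGroup H] [NormedSpace ℂ H]

/-- The exponential polynomial `∑ⱼ e^{iγⱼy} bⱼ` damped by `e^{-a|y|}`. The damping is placed inside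
the exponents so that each term is a two-sided exponential. -/
noncomputable def dampedExpSum (a : ℝ) (γ : ι → ℝ) (b : ι → H) (y : ℝ) : H :=
  ∑ j, cexp (I * γ j * y - a * |y|) • b j

/-- The transform-side counterpart of `dampedExpSum`: a superposition of unnormalised Cauchy
densities of width `a` centred at the frequencies `γⱼ`. -/
noncomputable def cauchySum (a : ℝ) (γ : ι → ℝ) (b : ι → H) (t : ℝ) : H :=
  ∑ j, (((a ^ 2 + (t - γ j) ^ 2)⁻¹ : ℝ) : ℂ) • b j

lemma continuous_dampedExpSum (a : ℝ) (γ : ι → ℝ) (b : ι → H) :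
    Continuous (dampedExpSum a γ b) := by
  unfold dampedExpSum
  fun_prop

lemma integrable_dampedExpSum {a : ℝ} (ha : 0 < a) (γ : ι → ℝ) (b : ι → H) :
    Integrable (dampedExpSum a γ b) :=
  integrable_finsetSum _ fun j _ ↦
    (integrable_cexp_mul_sub_mul_abs (by simpa using ha)).smul_const (b j)

lemma norm_dampedExpSum_sq (a : ℝ) (γ : ι → ℝ) (b : ι → H) (y : ℝ) :
    ‖dampedExpSum a γ b y‖ ^ 2
      = ‖∑ j, cexp (I * γ j * y) • b j‖ ^ 2 * Real.exp (-(2 * (a * |y|))) := by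
  have hfactor : dampedExpSum a γ b y
      = (Real.exp (-(a * |y|)) : ℂ) • ∑ j, cexp (I * γ j * y) • b j := by
    simp only [dampedExpSum, Finset.smul_sum, smul_smul, ofReal_exp, ← Complex.exp_add,
      ofReal_neg, ofReal_mul, neg_add_eq_sub]
  rw [hfactor, norm_smul, norm_real, Real.norm_of_nonneg (Real.exp_nonneg _), mul_pow,
    ← Real.exp_nat_mul, mul_comm, Nat.cast_ofNat, mul_neg]

lemma fourier_dampedExpSum [CompleteSpace H] {a : ℝ} (ha : 0 < a) (γ : ι → ℝ) (b : ι → H)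
    (w : ℝ) :
    𝓕 (dampedExpSum a γ b) w = ((2 * a : ℝ) : ℂ) • cauchySum a γ b (2 * π * w) := by
  have hmodulate (y : ℝ) : cexp (↑(-2 * π * y * w) * I) • dampedExpSum a γ b y
      = ∑ j, cexp (I * (γ j - 2 * π * w : ℝ) * y - a * |y|) • b j := by
    simp only [dampedExpSum, Finset.smul_sum, smul_smul, ← Complex.exp_add]
    congr! 3
    push_cast
    ring
  have hre (x : ℝ) : |(I * (x : ℂ)).re| < (a : ℂ).re := by simpa using ha
  simp only [fourier_real_eq_integral_exp_smul, hmodulate, cauchySum, Finset.smul_sum, smul_smul]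
  rw [integral_finsetSum _ fun j _ ↦ (integrable_cexp_mul_sub_mul_abs (hre _)).smul_const (b j)]
  refine Finset.sum_congr rfl fun j _ ↦ ?_
  rw [integral_smul_const, integral_cexp_mul_sub_mul_abs (hre _), mul_pow, I_sq, div_eq_mul_inv]
  push_cast
  ring_nf

lemma integrable_fourier_dampedExpSum [CompleteSpace H] {a : ℝ} (ha : 0 < a) (γ : ι → ℝ)
    (b : ι → H) : Integrable (𝓕 (dampedExpSum a γ b)) := by
  simp only [funext (fourier_dampedExpSum ha γ b), cauchySum]
  refine Integrable.smul _ (integrable_finsetSum _ fun j _ ↦ Integrable.smul_const ?_ (b j))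
  exact ((integrable_inv_sq_add_sq_sub ha.ne' (γ j)).comp_mul_left' (by positivity)).ofReal

end DampedExpSum

theorem plancherel_cauchy_sum_general {ι H : Type*} [Fintype ι] [NormedAddCommGroup H]
    [InnerProductSpace ℂ H] [CompleteSpace H] {a : ℝ} (ha : 0 < a) (γ : ι → ℝ) (b : ι → H) :
    ∫ t : ℝ, ‖∑ j, (((a ^ 2 + (t - γ j) ^ 2)⁻¹ : ℝ) : ℂ) • b j‖ ^ 2
      = π / (2 * a ^ 2) *
        ∫ y : ℝ, ‖∑ j, cexp (I * γ j * y) • b j‖ ^ 2 * Real.exp (-(2 * (a * |y|))) := by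
  change ∫ t : ℝ, ‖cauchySum a γ b t‖ ^ 2 = _
  have hfourier (w : ℝ) :
      ‖𝓕 (dampedExpSum a γ b) w‖ ^ 2 = (2 * a) ^ 2 * ‖cauchySum a γ b (2 * π * w)‖ ^ 2 := by
    rw [fourier_dampedExpSum ha, norm_smul, norm_real, Real.norm_of_nonneg (by positivity), mul_pow]
  have hrescale :
      ∫ w : ℝ, ‖cauchySum a γ b (2 * π * w)‖ ^ 2
        = (2 * π)⁻¹ * ∫ t : ℝ, ‖cauchySum a γ b t‖ ^ 2 := by
    rw [Measure.integral_comp_mul_left (fun t ↦ ‖cauchySum a γ b t‖ ^ 2),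
      abs_of_pos (by positivity), smul_eq_mul]
  have hplancherel := integral_norm_sq_fourier_of_integrable (continuous_dampedExpSum a γ b)
    (integrable_dampedExpSum ha γ b) (integrable_fourier_dampedExpSum ha γ b)
  simp only [hfourier, integral_const_mul, hrescale, norm_dampedExpSum_sq] at hplancherel
  rw [← hplancherel]
  field_simp

/-- **Plancherel-type identity.** For `b : Fin n → ℂ`, `γ : Fin n → ℝ` and `Y ∈ ℝ`,
`∫ |∑ⱼ bⱼ e^{iγⱼY}/(1+(t-γⱼ)²)|² dt = (π/2) ∫ |∑ⱼ bⱼ e^{iγⱼ(Y+y)}|² e^{-2|y|} dy`. -/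
theorem plancherel_cauchy_sum (n : ℕ) (b : Fin n → ℂ) (γ : Fin n → ℝ) (Y : ℝ) :
    (∫ t : ℝ, (norm (E := ℂ) (∑ j : Fin n,
        b j * Complex.exp (Complex.I * (γ j : ℂ) * (Y : ℂ)) /
          (((1 + (t - γ j) ^ 2 : ℝ)) : ℂ))) ^ 2)
      = π / 2 * ∫ y : ℝ, (norm (E := ℂ) (∑ j : Fin n,
          b j * Complex.exp (Complex.I * (γ j : ℂ) * ((Y + y : ℝ) : ℂ)))) ^ 2 *
            Real.exp (-(2 * |y|)) := by
  simpa [mul_add, Complex.exp_add, div_eq_mul_inv, mul_comm, mul_left_comm, mul_assoc] using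
    plancherel_cauchy_sum_general one_pos γ fun j ↦ b j * cexp (I * γ j * Y)
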